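/- arXiv:2506.22578 — 5 statements merged into one kernel-verified Lean document; each statement's English description precedes it below -/
import Mathlib

section
/- Let Y be a nonempty finite type, s : Y → ℝ a vector of logits, and let softmax(s)(y) = exp(s(y)) / Σ_{y'∈Y} exp(s(y')). Fix y* ∈ Y, let r : Y → ℝ satisfy r(y) > 0 for all y, let c ∈ ℝ, and let p, q : Y → ℝ be probability weights (nonnegative, summing to 1) with p(y*) = 0 and q(y*) = 0. For t ∈ ℝ define the perturbed logits s_t(y) = s(y) + t·[y = y*] and the objective F(t) = Σ_y p(y)·(log softmax(s_t)(y) − log r(y) + c) − log( Σ_y q(y) · (softmax(s_t)(y)/r(y)) · e^c ). Then F is differentiable at 0 and F'(0) = 0. (DV/MINE Starvation Theorem: with the log-ratio critic, the DV objective provides no gradient signal along the logit of a response y* that is outside the support of both the chosen and the negative-pool distributions.) -/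
open Real Finset

/-- Softmax over a finite type: `softmax s y = exp (s y) / ∑ y', exp (s y')`. -/
noncomputable def softmax {Y : Type*} [Fintype Y] (s : Y → ℝ) (y : Y) : ℝ :=
  Real.exp (s y) / ∑ y', Real.exp (s y')

/-- **DV/MINE Starvation Theorem.** With the log-ratio critic
`T(y) = log softmax(s)(y) − log r(y) + c`, if the chosen distribution `p` and the
negative-pool distribution `q` both assign zero mass to `y*`, then the DV objective
has zero derivative along the logit of `y*`. -/
theorem dv_mine_starvation {Y : Type*} [Fintype Y] [Nonempty Y] [DecidableEq Y]
    (s : Y → ℝ) (ystar : Y) (r : Y → ℝ) (hr : ∀ y, 0 < r y) (c : ℝ)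
    (p q : Y → ℝ)
    (hp0 : ∀ y, 0 ≤ p y) (hp1 : ∑ y, p y = 1)
    (hq0 : ∀ y, 0 ≤ q y) (hq1 : ∑ y, q y = 1)
    (hpstar : p ystar = 0) (hqstar : q ystar = 0) :
    HasDerivAt (fun t : ℝ =>
      (∑ y, p y *
        (Real.log (softmax (fun y' => s y' + t * (if y' = ystar then 1 else 0)) y)
          - Real.log (r y) + c))
      - Real.log (∑ y, q y *
          (softmax (fun y' => s y' + t * (if y' = ystar then 1 else 0)) y / r y) *
          Real.exp c))
      0 0 := by
  have hZ : ∀ t : ℝ, 0 < ∑ y', Real.exp (s y' + t * (if y' = ystar then 1 else 0)) :=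
    fun t => Finset.sum_pos (fun i _ => Real.exp_pos _) Finset.univ_nonempty
  have hA : 0 < ∑ y, q y * (Real.exp (s y) / r y) * Real.exp c := by
    have hnn : ∀ y ∈ (Finset.univ : Finset Y),
        0 ≤ q y * (Real.exp (s y) / r y) * Real.exp c := fun y _ =>
      mul_nonneg (mul_nonneg (hq0 y) (div_pos (Real.exp_pos _) (hr y)).le) (Real.exp_pos _).le
    refine lt_of_le_of_ne (Finset.sum_nonneg hnn) (fun h => ?_)
    have h0 := (Finset.sum_eq_zero_iff_of_nonneg hnn).1 h.symm
    have hq : ∀ y, q y = 0 := fun y => by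
      have h1 := h0 y (Finset.mem_univ y)
      have h2 := (div_pos (Real.exp_pos (s y)) (hr y)).ne'
      have h3 := (Real.exp_pos c).ne'
      rcases mul_eq_zero.1 h1 with h4 | h4
      · exact (mul_eq_zero.1 h4).resolve_right h2
      · exact absurd h4 h3
    simp [hq] at hq1
  have key : (fun t : ℝ =>
      (∑ y, p y *
        (Real.log (softmax (fun y' => s y' + t * (if y' = ystar then 1 else 0)) y)
          - Real.log (r y) + c))
      - Real.log (∑ y, q y *
          (softmax (fun y' => s y' + t * (if y' = ystar then 1 else 0)) y / r y) *
          Real.exp c)) = fun _ =>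
      (∑ y, p y * (s y - Real.log (r y) + c))
        - Real.log (∑ y, q y * (Real.exp (s y) / r y) * Real.exp c) := by
    funext t
    have hz := hZ t
    unfold softmax
    set Z := ∑ y', Real.exp (s y' + t * (if y' = ystar then 1 else 0)) with hZdef
    have e1 : ∑ y, p y * (Real.log (Real.exp (s y + t * (if y = ystar then 1 else 0)) / Z)
          - Real.log (r y) + c)
        = (∑ y, p y * (s y - Real.log (r y) + c)) - Real.log Z := by
      have : Real.log Z = ∑ y, p y * Real.log Z := by
        rw [← Finset.sum_mul, hp1, one_mul]
      rw [this, ← Finset.sum_sub_distrib]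
      refine Finset.sum_congr rfl (fun y _ => ?_)
      by_cases hy : y = ystar
      · subst hy; simp [hpstar]
      · rw [Real.log_div (Real.exp_pos _).ne' hz.ne', Real.log_exp, if_neg hy]
        ring
    have e2 : ∑ y, q y * (Real.exp (s y + t * (if y = ystar then 1 else 0)) / Z / r y)
          * Real.exp c
        = (∑ y, q y * (Real.exp (s y) / r y) * Real.exp c) / Z := by
      rw [Finset.sum_div]
      refine Finset.sum_congr rfl (fun y _ => ?_)
      by_cases hy : y = ystar
      · subst hy; simp [hqstar]
      · rw [if_neg hy, mul_zero, add_zero]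
        ring
    rw [e1, e2, Real.log_div hA.ne' hz.ne']
    ring
  rw [key]
  exact hasDerivAt_const _ _
end

section
/- Let Y be a nonempty finite type, s : Y → ℝ logits, softmax(s)(y) = exp(s(y)) / Σ_{y'} exp(s(y')). Fix y* ∈ Y and probability weights p, q : Y → ℝ with p(y*) = 0 and q(y*) = 0. Let L ≥ 0 and let G : Y → ℝ → ℝ be such that for every y, the function G(y) is differentiable on ℝ with |(G(y))'(t)| ≤ L for all t. For t ∈ ℝ define s_t(y) = s(y) + t·[y = y*], T_t(y) = G(y)(log softmax(s_t)(y)), and F(t) = Σ_y p(y)·T_t(y) − log( Σ_y q(y)·exp(T_t(y)) ). Then |F'(0)| ≤ 2·L·softmax(s)(y*). (DV/MINE Starvation Theorem Pro: the directional derivative of the DV objective along the logit of y* decays at least linearly in softmax(s)(y*) for Lipschitz critics.) -/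
open Real Finset

/-- **DV/MINE Starvation Theorem Pro.** For critics of the form
`T(y) = G(y, log softmax(s)(y))` with `G` differentiable and `L`-Lipschitz in the second
argument, if `p` and `q` assign zero mass to `y*`, then the derivative of the DV
objective along the logit of `y*` is bounded by `2 · L · softmax(s)(y*)`. -/
theorem dv_mine_starvation_pro {Y : Type*} [Fintype Y] [Nonempty Y] [DecidableEq Y]
    (s : Y → ℝ) (ystar : Y)
    (p q : Y → ℝ)
    (hp0 : ∀ y, 0 ≤ p y) (hp1 : ∑ y, p y = 1)
    (hq0 : ∀ y, 0 ≤ q y) (hq1 : ∑ y, q y = 1)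
    (hpstar : p ystar = 0) (hqstar : q ystar = 0)
    (L : ℝ) (hL : 0 ≤ L)
    (G : Y → ℝ → ℝ)
    (hGdiff : ∀ y, Differentiable ℝ (G y))
    (hGlip : ∀ y t, |deriv (G y) t| ≤ L) :
    |deriv (fun t : ℝ =>
      (∑ y, p y *
        G y (Real.log (softmax (fun y' => s y' + t * (if y' = ystar then 1 else 0)) y)))
      - Real.log (∑ y, q y *
          Real.exp (G y
            (Real.log (softmax (fun y' => s y' + t * (if y' = ystar then 1 else 0)) y)))))
      0| ≤ 2 * L * softmax s ystar := by
  set σ := softmax s ystar with hσ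
  have hZ : ∀ t : ℝ, 0 < ∑ y', Real.exp (s y' + t * (if y' = ystar then 1 else 0)) := fun t =>
    Finset.sum_pos (fun _ _ => Real.exp_pos _) Finset.univ_nonempty
  have hσ0 : 0 ≤ σ := by
    rw [hσ]
    unfold softmax
    positivity
  have hlog : ∀ y (t : ℝ),
      Real.log (softmax (fun y' => s y' + t * (if y' = ystar then 1 else 0)) y)
      = s y + t * (if y = ystar then 1 else 0)
        - Real.log (∑ y', Real.exp (s y' + t * (if y' = ystar then 1 else 0))) := by
    intro y t
    unfold softmax
    rw [Real.log_div (Real.exp_pos _).ne' (hZ t).ne', Real.log_exp]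
  have hlin : ∀ y, HasDerivAt (fun t : ℝ => s y + t * (if y = ystar then (1 : ℝ) else 0))
      (if y = ystar then (1 : ℝ) else 0) 0 := by
    intro y
    simpa using ((hasDerivAt_id (0 : ℝ)).mul_const (if y = ystar then (1 : ℝ) else 0)).const_add
      (s y)
  have hZd : HasDerivAt
      (fun t : ℝ => ∑ y', Real.exp (s y' + t * (if y' = ystar then (1 : ℝ) else 0)))
      (Real.exp (s ystar)) 0 := by
    have h := HasDerivAt.fun_sum (u := Finset.univ) (fun y _ => (hlin y).exp)
    simpa using h
  have hl : ∀ y, HasDerivAt (fun t : ℝ =>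
      Real.log (softmax (fun y' => s y' + t * (if y' = ystar then 1 else 0)) y))
      ((if y = ystar then (1 : ℝ) else 0) - σ) 0 := by
    intro y
    simp only [hlog]
    have h := (hlin y).fun_sub (hZd.log (hZ 0).ne')
    simpa [hσ, softmax] using h
  obtain ⟨D, hD, hDs⟩ : ∃ D : Y → ℝ, (∀ y, HasDerivAt (fun t : ℝ => G y
      (Real.log (softmax (fun y' => s y' + t * (if y' = ystar then 1 else 0)) y))) (D y) 0) ∧
      ∀ y, y ≠ ystar → |D y| ≤ L * σ := by
    refine ⟨fun y => _, fun y => ((hGdiff y _).hasDerivAt).comp (0 : ℝ) (hl y), ?_⟩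
    intro y hy
    simp only [hy, if_false, zero_sub, abs_mul, abs_neg, abs_of_nonneg hσ0]
    exact mul_le_mul_of_nonneg_right (hGlip _ _) hσ0
  -- a weighted sum of the derivatives with nonnegative weights vanishing at `ystar`
  have key : ∀ w : Y → ℝ, (∀ y, 0 ≤ w y) → w ystar = 0 →
      |∑ y, w y * D y| ≤ (∑ y, w y) * (L * σ) := by
    intro w hw hws
    rw [Finset.sum_mul]
    refine (Finset.abs_sum_le_sum_abs _ _).trans (Finset.sum_le_sum fun y _ => ?_)
    by_cases hy : y = ystar
    · simp [hy, hws]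
    · rw [abs_mul, abs_of_nonneg (hw y)]
      exact mul_le_mul_of_nonneg_left (hDs y hy) (hw y)
  have hP := HasDerivAt.fun_sum (u := Finset.univ) (fun y _ => (hD y).const_mul (p y))
  have hQ := HasDerivAt.fun_sum (u := Finset.univ) (fun y _ => ((hD y).exp).const_mul (q y))
  have hpos : ∀ e : Y → ℝ, 0 < ∑ y, q y * Real.exp (e y) := by
    intro e
    obtain ⟨y, -, hy⟩ : ∃ y ∈ Finset.univ, 0 < q y := by
      apply Finset.exists_lt_of_sum_lt (f := fun _ => (0 : ℝ))
      simp [hq1]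
    exact Finset.sum_pos' (fun y _ => mul_nonneg (hq0 y) (Real.exp_pos _).le)
      ⟨y, Finset.mem_univ _, mul_pos hy (Real.exp_pos _)⟩
  have hF := hP.fun_sub (hQ.log (hpos _).ne')
  rw [hF.deriv]
  have h1 := key p hp0 hpstar
  rw [hp1, one_mul] at h1
  have h2 : ∀ e : Y → ℝ, |(∑ y, q y * (Real.exp (e y) * D y)) / ∑ y, q y * Real.exp (e y)|
      ≤ L * σ := by
    intro e
    rw [abs_div, abs_of_pos (hpos e), div_le_iff₀ (hpos e), mul_comm]
    have h := key (fun y => q y * Real.exp (e y))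
      (fun y => mul_nonneg (hq0 y) (Real.exp_pos _).le) (by simp [hqstar])
    simpa only [mul_assoc, mul_comm, mul_left_comm] using h
  refine (abs_sub _ _).trans ((add_le_add h1 (h2 _)).trans (by linarith))
end

section
/- Let α > 0, β > 0, and for π⁺, π⁻ > 0 let ℓ(π⁺, π⁻) = log(1 + α·(π⁻/π⁺)^β) be the DPO loss. Then the ratio of gradient magnitudes satisfies |∂ℓ/∂π⁻| / |∂ℓ/∂π⁺| = π⁺/π⁻. (The gradient on the rejected probability grows faster than that on the chosen probability exactly by the factor π⁺/π⁻.) -/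
open Real

/-- The DPO loss `ℓ(π⁺, π⁻) = log (1 + α·(π⁻/π⁺)^β)` (real power). -/
noncomputable def dpoLoss (α β πp πm : ℝ) : ℝ :=
  Real.log (1 + α * (πm / πp) ^ β)

theorem dpo_aux (α β z : ℝ) (hα : 0 < α) (hβ : 0 < β) (hz : 0 < z) :
    ∃ D : ℝ, 0 < D ∧ HasDerivAt (fun z => Real.log (1 + α * z ^ β)) D z := by
  have h1 : HasDerivAt (fun z : ℝ => z ^ β) (β * z ^ (β - 1)) z :=
    Real.hasDerivAt_rpow_const (Or.inl hz.ne')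
  have hpos : 0 < 1 + α * z ^ β := by positivity
  exact ⟨_, by positivity, ((h1.const_mul α).const_add 1).log hpos.ne'⟩

/-- **Gradient-magnitude ratio of the DPO loss**:
`|∂ℓ/∂π⁻| / |∂ℓ/∂π⁺| = π⁺/π⁻`. -/
theorem dpo_gradient_ratio (α β πp πm : ℝ)
    (hα : 0 < α) (hβ : 0 < β) (hπp : 0 < πp) (hπm : 0 < πm) :
    |deriv (fun x => dpoLoss α β πp x) πm| / |deriv (fun x => dpoLoss α β x πm) πp|
      = πp / πm := by
  obtain ⟨D, hD, h⟩ := dpo_aux α β (πm / πp) hα hβ (by positivity)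
  have e1 : HasDerivAt (fun x => dpoLoss α β πp x) (D * (1 / πp)) πm :=
    HasDerivAt.comp (h₂ := fun z => Real.log (1 + α * z ^ β)) (h := fun x => x / πp)
      πm h ((hasDerivAt_id πm).div_const πp)
  have e2 : HasDerivAt (fun x => dpoLoss α β x πm) (D * (πm * (-(πp ^ 2)⁻¹))) πp :=
    HasDerivAt.comp (h₂ := fun z => Real.log (1 + α * z ^ β)) (h := fun x => πm / x)
      πp h ((hasDerivAt_inv hπp.ne').const_mul πm)
  have a1 : |D * (1 / πp)| = D / πp := by
    rw [abs_of_pos (by positivity)]; ring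
  have a2 : |D * (πm * (-(πp ^ 2)⁻¹))| = D * πm / πp ^ 2 := by
    rw [mul_neg, mul_neg, abs_neg, abs_of_pos (by positivity)]; ring
  rw [e1.deriv, e2.deriv, a1, a2]
  field_simp
end

section
/- Let Y be a nonempty finite type, and let p, q : Y → ℝ be probability weights such that q(y) > 0 whenever p(y) > 0. Then for every function T : Y → ℝ, Σ_y p(y)·T(y) − log( Σ_y q(y)·exp(T(y)) ) ≤ Σ_{y : p(y) > 0} p(y)·log( p(y)/q(y) ). (Donsker–Varadhan lower bound on the Kullback–Leibler divergence, the variational inequality underlying the MINE estimator.) -/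
open Real Finset

/-- **Donsker–Varadhan lower bound on the KL divergence.** For probability weights `p`, `q`
on a finite type with `p ≪ q`, and any critic `T`,
`Σ_y p(y)·T(y) − log (Σ_y q(y)·e^{T(y)}) ≤ KL(p‖q)`. -/
theorem donsker_varadhan_bound {Y : Type*} [Fintype Y] [Nonempty Y]
    (p q : Y → ℝ)
    (hp0 : ∀ y, 0 ≤ p y) (hp1 : ∑ y, p y = 1)
    (hq0 : ∀ y, 0 ≤ q y) (hq1 : ∑ y, q y = 1)
    (hac : ∀ y, 0 < p y → 0 < q y)
    (T : Y → ℝ) :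
    (∑ y, p y * T y) - Real.log (∑ y, q y * Real.exp (T y)) ≤
      ∑ y ∈ Finset.univ.filter (fun y => 0 < p y), p y * Real.log (p y / q y) := by
  obtain ⟨y0, hy0⟩ : ∃ y, 0 < q y := by
    by_contra! h
    have : ∑ y, q y ≤ 0 := Finset.sum_nonpos (fun y _ => h y)
    linarith
  have hZ : 0 < ∑ y, q y * Real.exp (T y) :=
    Finset.sum_pos' (fun y _ => mul_nonneg (hq0 y) (Real.exp_pos _).le)
      ⟨y0, Finset.mem_univ _, mul_pos hy0 (Real.exp_pos _)⟩
  set Z := ∑ y, q y * Real.exp (T y) with hZdef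
  rw [Finset.sum_filter]
  have key : ∀ y, p y * T y - p y * Real.log Z
      - (if 0 < p y then p y * Real.log (p y / q y) else 0)
      ≤ q y * Real.exp (T y) / Z - p y := by
    intro y
    split_ifs with h
    · have hq := hac y h
      have he := Real.exp_pos (T y)
      have h1 : 0 < q y * Real.exp (T y) / (Z * p y) := by positivity
      have h2 := Real.log_le_sub_one_of_pos h1
      rw [Real.log_div (by positivity) (by positivity),
        Real.log_mul hq.ne' he.ne', Real.log_mul hZ.ne' h.ne', Real.log_exp] at h2
      have h3 := mul_le_mul_of_nonneg_left h2 h.le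
      have h4 : p y * (q y * Real.exp (T y) / (Z * p y) - 1)
          = q y * Real.exp (T y) / Z - p y := by
        field_simp
      rw [h4] at h3
      rw [Real.log_div h.ne' hq.ne']
      linarith
    · have h0 : p y = 0 := le_antisymm (not_lt.mp h) (hp0 y)
      have : 0 ≤ q y * Real.exp (T y) / Z :=
        div_nonneg (mul_nonneg (hq0 y) (Real.exp_pos _).le) hZ.le
      simpa [h0] using this
  have hs := Finset.sum_le_sum (fun y (_ : y ∈ Finset.univ) => key y)
  rw [Finset.sum_sub_distrib, Finset.sum_sub_distrib, Finset.sum_sub_distrib,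
    ← Finset.sum_mul, ← Finset.sum_div, ← hZdef, div_self hZ.ne', hp1] at hs
  linarith
end

section
/- Let Y be a nonempty finite type, and let p, q, ρ : Y → ℝ be probability weights with q(y) > 0 whenever p(y) > 0. Define the mixture q̄(y) = (1/2)·(q(y) + ρ(y)). Then for every function T : Y → ℝ, Σ_y p(y)·T(y) − log( 2·Σ_y q̄(y)·exp(T(y)) ) ≤ Σ_{y : p(y) > 0} p(y)·log( p(y)/q(y) ). (Modified DV bound (C.1)/Equation (5): replacing the negative-sample distribution by twice the chosen–rejection mixture still lower-bounds the KL divergence, since Σ_y q(y)e^{T(y)} ≤ 2·Σ_y q̄(y)e^{T(y)}.) -/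
open Real Finset

/-- **Modified DV bound (C.1).** For probability weights `p`, `q`, `ρ` on a finite type
with `p ≪ q`, and the mixture `q̄ = ½(q + ρ)`, for every critic `T`:
`Σ_y p(y)·T(y) − log (2·Σ_y q̄(y)·e^{T(y)}) ≤ KL(p‖q)`. -/
theorem modified_dv_bound {Y : Type*} [Fintype Y] [Nonempty Y]
    (p q ρ : Y → ℝ)
    (hp0 : ∀ y, 0 ≤ p y) (hp1 : ∑ y, p y = 1)
    (hq0 : ∀ y, 0 ≤ q y) (hq1 : ∑ y, q y = 1)
    (hρ0 : ∀ y, 0 ≤ ρ y) (hρ1 : ∑ y, ρ y = 1)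
    (hac : ∀ y, 0 < p y → 0 < q y)
    (T : Y → ℝ) :
    (∑ y, p y * T y) -
        Real.log (2 * ∑ y, (1 / 2) * (q y + ρ y) * Real.exp (T y)) ≤
      ∑ y ∈ Finset.univ.filter (fun y => 0 < p y), p y * Real.log (p y / q y) := by
  set Z : ℝ := 2 * ∑ y, (1 / 2) * (q y + ρ y) * Real.exp (T y) with hZ
  have hle : ∑ y, q y * Real.exp (T y) ≤ Z := by
    rw [hZ, Finset.mul_sum]
    apply Finset.sum_le_sum
    intro y _
    have := mul_nonneg (hρ0 y) (Real.exp_pos (T y)).le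
    linarith
  have hpos : 0 < ∑ y, q y * Real.exp (T y) := by
    obtain ⟨y, -, hy⟩ : ∃ y ∈ Finset.univ, q y ≠ 0 := by
      apply Finset.exists_ne_zero_of_sum_ne_zero
      rw [hq1]; exact one_ne_zero
    apply Finset.sum_pos' (fun y _ => mul_nonneg (hq0 y) (Real.exp_pos _).le)
    exact ⟨y, Finset.mem_univ _, mul_pos (lt_of_le_of_ne (hq0 y) (Ne.symm hy)) (Real.exp_pos _)⟩
  have hZpos : 0 < Z := lt_of_lt_of_le hpos hle
  have key : ∀ y, p y * T y - p y * Real.log Z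
      ≤ (if 0 < p y then p y * Real.log (p y / q y) else 0)
        + (q y * Real.exp (T y) / Z - p y) := by
    intro y
    split_ifs with h
    · have hq := hac y h
      have h1 := Real.log_le_sub_one_of_pos
        (show 0 < q y * Real.exp (T y) / (p y * Z) by positivity)
      rw [Real.log_div (by positivity) (by positivity), Real.log_mul hq.ne' (by positivity),
        Real.log_mul h.ne' hZpos.ne', Real.log_exp] at h1
      rw [Real.log_div h.ne' hq.ne']
      have h2 := mul_le_mul_of_nonneg_left h1 h.le
      have h3 : p y * (q y * Real.exp (T y) / (p y * Z) - 1)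
          = q y * Real.exp (T y) / Z - p y := by
        field_simp
      rw [h3] at h2
      linarith
    · have h0 : p y = 0 := le_antisymm (not_lt.mp h) (hp0 y)
      have := div_nonneg (mul_nonneg (hq0 y) (Real.exp_pos (T y)).le) hZpos.le
      rw [h0]
      linarith
  have hs := Finset.sum_le_sum (fun y (_ : y ∈ Finset.univ) => key y)
  rw [Finset.sum_sub_distrib, Finset.sum_add_distrib, Finset.sum_sub_distrib, ← Finset.sum_mul,
    hp1, ← Finset.sum_div, ← Finset.sum_filter] at hs
  have := (div_le_one hZpos).mpr hle
  linarith
end
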